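/- (Proved within Theorem 4) It is decidable, given a finite set B of terms in CQ normal form and a shift S, whether S is extenuative for B, i.e. whether S is bad for B and for each natural number n there exists a finite sequence F_1,…,F_k of members of B such that the CQ normal form of S*F_1*…*F_k has length at least n. -/

import Mathlib

/-- Terms of the free (quasi-)Cartesian monoid: constants `I, L, R`,
composition `comp` (written `*` in the paper) and pairing `pair`. -/
inductive Term : Type
  | I : Term
  | L : Term
  | R : Term
  | comp : Term → Term → Term
  | pair : Term → Term → Term
  deriving DecidableEq

open Term

/-- The rewrite rules (1)-(7), indexed by their number. -/
inductive Rule : ℕ → Term → Term → Prop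
  | r1 (x y : Term) : Rule 1 (comp L (pair x y)) x
  | r2 (x y : Term) : Rule 2 (comp R (pair x y)) y
  | r3 (x y z : Term) : Rule 3 (comp (pair x y) z) (pair (comp x z) (comp y z))
  | r4 (x : Term) : Rule 4 (comp I x) x
  | r5 (x : Term) : Rule 5 (comp x I) x
  | r6 (x : Term) : Rule 6 (pair (comp L x) (comp R x)) x
  | r7 : Rule 7 (pair L R) I

/-- The congruence generated by associativity of `comp`. -/
inductive AssocEq : Term → Term → Prop
  | assoc (a b c : Term) : AssocEq (comp (comp a b) c) (comp a (comp b c))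
  | refl (a : Term) : AssocEq a a
  | symm {a b : Term} : AssocEq a b → AssocEq b a
  | trans {a b c : Term} : AssocEq a b → AssocEq b c → AssocEq a c
  | comp_congr {a a' b b' : Term} :
      AssocEq a a' → AssocEq b b' → AssocEq (comp a b) (comp a' b')
  | pair_congr {a a' b b' : Term} :
      AssocEq a a' → AssocEq b b' → AssocEq (pair a b) (pair a' b')

/-- One-step rewriting by a rule whose index lies in `J`,
closed under replacement of subterms (monotone closure). -/
inductive Step (J : Set ℕ) : Term → Term → Prop
  | rule {n : ℕ} {x y : Term} : n ∈ J → Rule n x y → Step J x y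
  | comp_left {a a' b : Term} : Step J a a' → Step J (comp a b) (comp a' b)
  | comp_right {a b b' : Term} : Step J b b' → Step J (comp a b) (comp a b')
  | pair_left {a a' b : Term} : Step J a a' → Step J (pair a b) (pair a' b)
  | pair_right {a b b' : Term} : Step J b b' → Step J (pair a b) (pair a b')

/-- One-step rewriting modulo associativity. -/
def StepA (J : Set ℕ) (a b : Term) : Prop :=
  ∃ a' b', AssocEq a a' ∧ Step J a' b' ∧ AssocEq b' b

/-- Many-step rewriting `↠_J`: the monotone reflexive transitive closure of
one-step rewriting by the rules in `J`, modulo associativity. -/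
def Red (J : Set ℕ) (a b : Term) : Prop :=
  ∃ c, Relation.ReflTransGen (StepA J) a c ∧ AssocEq c b

/-- `a` is in normal form w.r.t. the rules in `J` (modulo associativity). -/
def NF (J : Set ℕ) (a : Term) : Prop := ∀ b, ¬ StepA J a b

/-- Rules (1)-(7). -/
def rules17 : Set ℕ := {n | 1 ≤ n ∧ n ≤ 7}
/-- Rules (1)-(5). -/
def rules15 : Set ℕ := {n | 1 ≤ n ∧ n ≤ 5}
/-- Rules (1)-(4). -/
def rules14 : Set ℕ := {n | 1 ≤ n ∧ n ≤ 4}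
/-- Rules (5), (6), (7). -/
def rules567 : Set ℕ := {5, 6, 7}

/-- The congruence `=_CM` generated by the Cartesian monoid axioms (i)-(iv)
and the monoid axioms for `comp` with unit `I`. -/
inductive CMEq : Term → Term → Prop
  | proj_left (f g : Term) : CMEq (comp L (pair f g)) f
  | proj_right (f g : Term) : CMEq (comp R (pair f g)) g
  | lift (f g h : Term) : CMEq (comp (pair f g) h) (pair (comp f h) (comp g h))
  | surj : CMEq (pair L R) I
  | assoc (a b c : Term) : CMEq (comp (comp a b) c) (comp a (comp b c))
  | one_mul (a : Term) : CMEq (comp I a) a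
  | mul_one (a : Term) : CMEq (comp a I) a
  | refl (a : Term) : CMEq a a
  | symm {a b : Term} : CMEq a b → CMEq b a
  | trans {a b c : Term} : CMEq a b → CMEq b c → CMEq a c
  | comp_congr {a a' b b' : Term} :
      CMEq a a' → CMEq b b' → CMEq (comp a b) (comp a' b')
  | pair_congr {a a' b b' : Term} :
      CMEq a a' → CMEq b b' → CMEq (pair a b) (pair a' b')

/-- The congruence `=_CQ` generated by the axioms (i)-(iii)
and the monoid axioms (no surjectivity `⟨L,R⟩ = I`). -/
inductive CQEq : Term → Term → Prop
  | proj_left (f g : Term) : CQEq (comp L (pair f g)) f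
  | proj_right (f g : Term) : CQEq (comp R (pair f g)) g
  | lift (f g h : Term) : CQEq (comp (pair f g) h) (pair (comp f h) (comp g h))
  | assoc (a b c : Term) : CQEq (comp (comp a b) c) (comp a (comp b c))
  | one_mul (a : Term) : CQEq (comp I a) a
  | mul_one (a : Term) : CQEq (comp a I) a
  | refl (a : Term) : CQEq a a
  | symm {a b : Term} : CQEq a b → CQEq b a
  | trans {a b c : Term} : CQEq a b → CQEq b c → CQEq a c
  | comp_congr {a a' b b' : Term} :
      CQEq a a' → CQEq b b' → CQEq (comp a b) (comp a' b')
  | pair_congr {a a' b b' : Term} :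
      CQEq a a' → CQEq b b' → CQEq (pair a b) (pair a' b')

/-- An injective numerical encoding of terms, used to state computability. -/
def encodeTerm : Term → ℕ
  | I => 0
  | L => 1
  | R => 2
  | comp a b => 2 * Nat.pair (encodeTerm a) (encodeTerm b) + 3
  | pair a b => 2 * Nat.pair (encodeTerm a) (encodeTerm b) + 4

/-- A numerical encoding of finite lists of terms. -/
def encodeTermList : List Term → ℕ
  | [] => 0
  | a :: l => Nat.pair (encodeTerm a) (encodeTermList l) + 1

/-- The product of a list of terms (with `I` as the empty product). -/
def listProd : List Term → Term
  | [] => I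
  | a :: l => comp a (listProd l)

/-- `=_CQ` as a setoid. -/
def cqSetoid : Setoid Term :=
  ⟨CQEq, ⟨fun a => CQEq.refl a, fun h => h.symm, fun h₁ h₂ => h₁.trans h₂⟩⟩

/-- The free categorical quasiproduct monoid `CQ = T / =_CQ`. -/
def CQ : Type := Quotient cqSetoid

/-- `=_CM` as a setoid. -/
def cmSetoid : Setoid Term :=
  ⟨CMEq, ⟨fun a => CMEq.refl a, fun h => h.symm, fun h₁ h₂ => h₁.trans h₂⟩⟩

/-- The free Cartesian monoid `CM = T / =_CM`. -/
def CM : Type := Quotient cmSetoid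

/-- The submonoid of `CQ` generated by (the classes of) the members of `B`,
as a set of elements of `CQ`. -/
def genSubmonoidCQ (B : List Term) : Set CQ :=
  {x | ∃ l : List Term, (∀ t ∈ l, t ∈ B) ∧ Quotient.mk cqSetoid (listProd l) = x}

/-- The submonoid of `CM` generated by (the classes of) the members of `B`,
as a set of elements of `CM`. -/
def genSubmonoidCM (B : List Term) : Set CM :=
  {x | ∃ l : List Term, (∀ t ∈ l, t ∈ B) ∧ Quotient.mk cmSetoid (listProd l) = x}

/-- A shift: a product (under `comp`) of copies of `L` and `R`,
with `I` as the empty product. -/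
inductive IsShift : Term → Prop
  | unit : IsShift I
  | left : IsShift L
  | right : IsShift R
  | comp {s t : Term} : IsShift s → IsShift t → IsShift (comp s t)

/-- The CQ normal form (normal form w.r.t. rules (1)-(5)) of `X` is a shift. -/
def nfIsShift (X : Term) : Prop :=
  ∃ N, Red rules15 X N ∧ NF rules15 N ∧ IsShift N

/-- The product `F_0 * ⋯ * F_{n-1}` of the first `n` values of a sequence. -/
def prodTake (f : ℕ → Term) (n : ℕ) : Term := listProd ((List.range n).map f)

/-- `B` covers Cantor space: there is an infinite sequence of members of `B`
such that for each shift `S` some finite initial product composed with `S`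
has a CQ normal form that is not a shift. -/
def Covers (B : List Term) : Prop :=
  ∃ f : ℕ → Term, (∀ n, f n ∈ B) ∧
    ∀ S, IsShift S → ∃ n, ¬ nfIsShift (comp S (prodTake f n))

/-- The shift `S` is bad for `B`: for every finite sequence of members of `B`,
the CQ normal form of `S*F_1*⋯*F_n` is a shift. -/
def BadFor (B : List Term) (S : Term) : Prop :=
  ∀ l : List Term, (∀ t ∈ l, t ∈ B) → nfIsShift (comp S (listProd l))

/-- The length of a shift: the number of occurrences of `L` and `R`. -/
def lenLR : Term → ℕ
  | I => 0
  | L => 1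
  | R => 1
  | comp a b => lenLR a + lenLR b
  | pair a b => lenLR a + lenLR b

/-- `S` is extenuative for `B`: it is bad for `B` and the CQ normal forms of
`S*F_1*⋯*F_k` (for `F_i` in `B`) have unbounded length. -/
def Extenuative (B : List Term) (S : Term) : Prop :=
  BadFor B S ∧ ∀ n : ℕ, ∃ l : List Term, (∀ t ∈ l, t ∈ B) ∧
    ∃ N, Red rules15 (comp S (listProd l)) N ∧ NF rules15 N ∧ n ≤ lenLR N

/-- A term represents a right invertible element of CM. -/
def RightInvCM (F : Term) : Prop := ∃ G, CMEq (comp F G) I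

/-!
A term `X` acts on shifts as a partial map: it sends `S` to the normal form of `S * X` when this is
a shift. On shifts viewed as words, whose heads are their rightmost factors, this map replaces
prefixes according to a finite list of rules. Multiplication by members of `B` is thus a prefix
rewriting system, and `S` is extenuative for `B` iff the words reachable from `S` all belong to the
domains of all members of `B` and are unboundedly long.

Let `K` bound `S` and the sides of the rules. Reachability between two given words is decidable, as
on words of length at most `K` it is the least relation that has some closure properties, which
only involve such words. Words of length at least `K` belong to all domains, so the first condition
is about finitely many words. As for the second one, a rewriting sequence to a long word leaves
behind garbage that is never touched again; if the word is longer than `K` times one more than the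
number of words of length at most `K`, then the same short prefix occurs twice, with garbage left
behind in between, and the sequence can be pumped. Such a word can be found just above this bound,
since a single step adds at most `K` letters.
-/

/-! ### Prefix rewriting -/

/-- A prefix rewriting system: finitely many rules `(p, v)`, each replacing a prefix `p` of a word
by `v`. Equivalently, a pushdown automaton with a single state, the head of a word being the top
of its stack. -/
abbrev PrefixSystem (α : Type*) := List (List α × List α)

namespace PrefixSystem

variable {α : Type*}

/-- One step of prefix rewriting. -/
def Rewrites (R : PrefixSystem α) (x y : List α) : Prop :=
  ∃ p v r, (p, v) ∈ R ∧ x = p ++ r ∧ y = v ++ r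

/-- Reachability by prefix rewriting. -/
def Reach (R : PrefixSystem α) : List α → List α → Prop :=
  Relation.ReflTransGen R.Rewrites

/-- All sides of rules have length at most `K`. -/
def Bounded (R : PrefixSystem α) (K : ℕ) : Prop :=
  ∀ p v, (p, v) ∈ R → p.length ≤ K ∧ v.length ≤ K

/-- The closure properties of reachability that can be observed on words of length at most `K`.
Reachability between such words is the least relation with these properties, although the
rewriting sequences themselves may leave the set of words of length at most `K`. -/
structure IsSaturated (R : PrefixSystem α) (K : ℕ) (D : List α → List α → Prop) : Prop where
  of_mem : ∀ p v, (p, v) ∈ R → D p v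
  refl : ∀ x, x.length ≤ K → D x x
  trans : ∀ x y z, D x y → D y z → D x z
  append : ∀ x y z, (x ++ z).length ≤ K → (y ++ z).length ≤ K → D x y → D (x ++ z) (y ++ z)

/-- `Tower D K x w`: the word `w` is obtained from `x` by repeatedly applying `D`, where all words
involved have length at most `K` and each application of `D` but the last one puts aside a suffix,
which is not touched again. -/
inductive Tower (D : List α → List α → Prop) (K : ℕ) : List α → List α → Prop
  | base {x y : List α} : D x y → y.length ≤ K → Tower D K x y
  | push {x y z w : List α} : D x (y ++ z) → (y ++ z).length ≤ K → Tower D K y w →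
      Tower D K x (w ++ z)

variable {R A B : PrefixSystem α} {D : List α → List α → Prop} {K : ℕ} {x y z w s : List α}

theorem Bounded.mono {M : ℕ} (hR : R.Bounded K) (hKM : K ≤ M) : R.Bounded M :=
  fun p v hpv => ⟨(hR p v hpv).1.trans hKM, (hR p v hpv).2.trans hKM⟩

theorem Rewrites.of_mem {p v : List α} (h : (p, v) ∈ R) : R.Rewrites p v :=
  ⟨p, v, [], h, (List.append_nil p).symm, (List.append_nil v).symm⟩

theorem Rewrites.append_right (h : R.Rewrites x y) (z : List α) :
    R.Rewrites (x ++ z) (y ++ z) := by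
  obtain ⟨p, v, r, hpv, rfl, rfl⟩ := h
  exact ⟨p, v, r ++ z, hpv, List.append_assoc .., List.append_assoc ..⟩

theorem Reach.append_right (h : R.Reach x y) (z : List α) : R.Reach (x ++ z) (y ++ z) :=
  Relation.ReflTransGen.lift (· ++ z) (fun _ _ hxy => Rewrites.append_right hxy z) _ _ h

theorem Reach.trans (hxy : R.Reach x y) (hyz : R.Reach y z) : R.Reach x z :=
  Relation.ReflTransGen.trans hxy hyz

theorem Rewrites.length_le (hR : R.Bounded K) (h : R.Rewrites x y) :
    y.length ≤ x.length + K := by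
  obtain ⟨p, v, r, hpv, rfl, rfl⟩ := h
  have := (hR p v hpv).2
  simp only [List.length_append]
  lia

theorem isSaturated_reach (R : PrefixSystem α) (K : ℕ) : R.IsSaturated K R.Reach where
  of_mem _ _ h := .single (.of_mem h)
  refl _ _ := .refl
  trans _ _ _ := .trans
  append _ _ z _ _ h := h.append_right z

theorem Tower.mem_of_length_le (hD : R.IsSaturated K D) (h : Tower D K x w) (hx : x.length ≤ K)
    (hw : w.length ≤ K) : D x w := by
  induction h with
  | base hxy => exact hxy
  | @push x y z w hxy hyz _ ih =>
    have hy : y.length ≤ K := by grind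
    have hyw : D y w := ih hy (by grind)
    exact hD.trans _ _ _ hxy (hD.append _ _ _ hyz hw hyw)

theorem Tower.rewrites (hR : R.Bounded K) (hD : R.IsSaturated K D) (h : Tower D K x y)
    (hx : x.length ≤ K) (hyw : R.Rewrites y w) : Tower D K x w := by
  induction h generalizing w with
  | @base x y hxy hy =>
    obtain ⟨p, v, r, hpv, rfl, rfl⟩ := hyw
    exact .push hxy hy (.base (hD.of_mem p v hpv) (hR p v hpv).2)
  | @push x b z u hxb hbz hu ih =>
    obtain ⟨p, v, r, hpv, huz, rfl⟩ := hyw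
    have hb : b.length ≤ K := by grind
    obtain ⟨c, rfl, rfl⟩ | ⟨c, rfl, rfl⟩ := List.append_eq_append_iff.1 huz
    · have hbc : (b ++ c).length ≤ K := by grind
      have huc : (u ++ c).length ≤ K := (hR _ v hpv).1
      have hbu : D b u := hu.mem_of_length_le hD hb (by grind)
      have hbcv : D (b ++ c) v :=
        hD.trans _ _ _ (hD.append _ _ _ hbc huc hbu) (hD.of_mem _ v hpv)
      rw [← List.append_assoc] at hxb hbz
      exact .push hxb hbz (.base hbcv (hR _ v hpv).2)
    · rw [← List.append_assoc]
      exact .push hxb hbz (ih hb ⟨p, v, c, hpv, rfl, rfl⟩)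

theorem Reach.tower (hR : R.Bounded K) (hD : R.IsSaturated K D) (hx : x.length ≤ K)
    (h : R.Reach x y) : Tower D K x y := by
  induction h with
  | refl => exact .base (hD.refl x hx) hx
  | tail _ hyz ih => exact ih.rewrites hR hD hx hyz

theorem reach_iff_forall_isSaturated (hR : R.Bounded K) (hx : x.length ≤ K) (hy : y.length ≤ K) :
    R.Reach x y ↔ ∀ D, R.IsSaturated K D → D x y :=
  ⟨fun h _ hD => (h.tower hR hD hx).mem_of_length_le hD hx hy,
    fun h => h _ (isSaturated_reach R K)⟩

/-- The system can rewrite the prefix `x` to `y` while leaving nonempty garbage behind it. -/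
def Grows (R : PrefixSystem α) (x y : List α) : Prop :=
  ∃ z ≠ [], R.Reach x (y ++ z)

theorem Grows.of_reach_append (hxy : R.Reach x (y ++ z)) (h : R.Grows y w) : R.Grows x w := by
  obtain ⟨q, hq, hyw⟩ := h
  exact ⟨q ++ z, by simp [hq], hxy.trans (by simpa using hyw.append_right z)⟩

theorem exists_reach_le_length_of_grows_self (hs : R.Reach s (x ++ z)) (hx : R.Grows x x) (n : ℕ) :
    ∃ w, R.Reach s w ∧ n ≤ w.length := by
  suffices ∃ r, R.Reach s (x ++ r) ∧ n ≤ r.length by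
    obtain ⟨r, hr, hn⟩ := this
    exact ⟨x ++ r, hr, by grind⟩
  obtain ⟨q, hq, hxx⟩ := hx
  induction n with
  | zero => exact ⟨z, hs, Nat.zero_le _⟩
  | succ n ih =>
    obtain ⟨r, hr, hn⟩ := ih
    refine ⟨q ++ r, hr.trans (by simpa using hxx.append_right r), ?_⟩
    have := List.length_pos_iff.2 hq
    rw [List.length_append]
    lia

theorem Tower.length_le [Finite α] (h : Tower R.Reach K x w) (hs : R.Reach s (x ++ z))
    (hirrefl : ∀ y r, R.Reach s (y ++ r) → ¬ R.Grows y y) :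
    w.length ≤ K * ({y | y.length ≤ K ∧ R.Grows x y}.ncard + 1) := by
  have hfin (x : List α) : {y | y.length ≤ K ∧ R.Grows x y}.Finite :=
    (List.finite_length_le α K).subset fun _ h => h.1
  induction h generalizing z with
  | base _ hy => exact hy.trans (Nat.le_mul_of_pos_right K (Nat.succ_pos _))
  | @push x y r w hxy hyr _ ih =>
    have hsy : R.Reach s (y ++ (r ++ z)) :=
      hs.trans (by simpa using hxy.append_right z)
    have hle := ih hsy
    have hsub : {u | u.length ≤ K ∧ R.Grows y u} ⊆ {u | u.length ≤ K ∧ R.Grows x u} :=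
      fun u hu => ⟨hu.1, hu.2.of_reach_append hxy⟩
    obtain rfl | hr := eq_or_ne r []
    · rw [List.append_nil]
      exact hle.trans (Nat.mul_le_mul_left K (Nat.succ_le_succ (Set.ncard_le_ncard hsub (hfin x))))
    -- `x` leaves garbage behind on its way to `y`, but `y` does not on its way to itself.
    · have hlt : {u | u.length ≤ K ∧ R.Grows y u}.ncard < {u | u.length ≤ K ∧ R.Grows x u}.ncard :=
        Set.ncard_lt_ncard (hsub.ssubset_of_mem_notMem (a := y) ⟨by grind, r, hr, hxy⟩
          fun hy => hirrefl y _ hsy hy.2) (hfin x)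
      calc (w ++ r).length ≤ K * ({u | u.length ≤ K ∧ R.Grows y u}.ncard + 1) + K := by grind
        _ = K * ({u | u.length ≤ K ∧ R.Grows y u}.ncard + 1 + 1) := (Nat.mul_succ ..).symm
        _ ≤ _ := Nat.mul_le_mul_left K (Nat.succ_le_succ hlt)

theorem Reach.exists_length_mem_Ioc (hR : R.Bounded K) {M : ℕ} (hs : s.length ≤ M)
    (h : R.Reach s w) (hw : M < w.length) :
    ∃ y, R.Reach s y ∧ M < y.length ∧ y.length ≤ M + K := by
  induction h with
  | refl => lia
  | @tail y w hsy hyw ih =>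
    by_cases hy : M < y.length
    · exact ih hy
    · exact ⟨w, hsy.tail hyw, hw, (hyw.length_le hR).trans (by lia)⟩

theorem forall_exists_reach_le_length_iff [Finite α] (hR : R.Bounded K) (hs : s.length ≤ K) {M : ℕ}
    (hM : K * ({y : List α | y.length ≤ K}.ncard + 1) ≤ M) :
    (∀ n, ∃ w, R.Reach s w ∧ n ≤ w.length) ↔
      ∃ w, R.Reach s w ∧ M < w.length ∧ w.length ≤ M + K := by
  constructor
  · intro h
    obtain ⟨w, hw, hMw⟩ := h (M + 1)
    have hKM : K ≤ M := (Nat.le_mul_of_pos_right K (Nat.succ_pos _)).trans hM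
    exact hw.exists_length_mem_Ioc hR (hs.trans hKM) hMw
  · rintro ⟨w, hw, hMw, -⟩
    by_contra hbdd
    have hirrefl (y r : List α) (hy : R.Reach s (y ++ r)) : ¬ R.Grows y y :=
      fun hyy => hbdd (exists_reach_le_length_of_grows_self hy hyy)
    have hle := (hw.tower hR (isSaturated_reach R K) hs).length_le (z := [])
      (by rw [List.append_nil]; exact .refl) hirrefl
    refine hMw.not_ge (hle.trans (le_trans ?_ hM))
    exact Nat.mul_le_mul_left K (Nat.succ_le_succ
      (Set.ncard_le_ncard (fun _ hy => hy.1) (List.finite_length_le α K)))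

section comp

variable [DecidableEq α]

/-- The system whose steps are a step of `A` followed by a step of `B`. The left side of a rule of
`B` either is a prefix of the right side of the rule of `A` or extends it into the context. -/
def comp (A B : PrefixSystem α) : PrefixSystem α :=
  A.flatMap fun a => B.flatMap fun b =>
    (if b.1 <+: a.2 then [(a.1, b.2 ++ a.2.drop b.1.length)] else []) ++
      if a.2 <+: b.1 then [(a.1 ++ b.1.drop a.2.length, b.2)] else []

theorem mem_comp {p v : List α} : (p, v) ∈ A.comp B ↔ ∃ p₁ v₁ p₂ v₂, (p₁, v₁) ∈ A ∧
    (p₂, v₂) ∈ B ∧ ((∃ c, v₁ = p₂ ++ c ∧ p = p₁ ∧ v = v₂ ++ c) ∨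
      ∃ c, p₂ = v₁ ++ c ∧ p = p₁ ++ c ∧ v = v₂) := by
  simp only [comp, List.mem_flatMap, List.mem_append, List.mem_ite_nil_right, List.mem_singleton,
    Prod.exists, Prod.mk.injEq]
  constructor
  · rintro ⟨p₁, v₁, h₁, p₂, v₂, h₂, ⟨⟨c, rfl⟩, rfl, rfl⟩ | ⟨⟨c, rfl⟩, rfl, rfl⟩⟩
    · exact ⟨_, _, _, _, h₁, h₂, .inl ⟨c, rfl, rfl, by simp⟩⟩
    · exact ⟨_, _, _, _, h₁, h₂, .inr ⟨c, rfl, by simp, rfl⟩⟩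
  · rintro ⟨p₁, v₁, p₂, v₂, h₁, h₂, ⟨c, rfl, rfl, rfl⟩ | ⟨c, rfl, rfl, rfl⟩⟩
    · exact ⟨_, _, h₁, _, _, h₂, .inl ⟨⟨c, rfl⟩, rfl, by simp⟩⟩
    · exact ⟨_, _, h₁, _, _, h₂, .inr ⟨⟨c, rfl⟩, by simp, rfl⟩⟩

theorem rewrites_comp_iff :
    (A.comp B).Rewrites x y ↔ ∃ z, A.Rewrites x z ∧ B.Rewrites z y := by
  constructor
  · rintro ⟨p, v, r, hpv, rfl, rfl⟩
    obtain ⟨p₁, v₁, p₂, v₂, h₁, h₂, ⟨c, rfl, rfl, rfl⟩ | ⟨c, rfl, rfl, rfl⟩⟩ := mem_comp.1 hpv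
    · exact ⟨_, ⟨_, _, r, h₁, rfl, rfl⟩, ⟨_, _, c ++ r, h₂, by simp, by simp⟩⟩
    · exact ⟨_, ⟨_, _, c ++ r, h₁, by simp, rfl⟩, ⟨_, _, r, h₂, by simp, rfl⟩⟩
  · rintro ⟨_, ⟨p₁, v₁, r, h₁, rfl, rfl⟩, ⟨p₂, v₂, r₂, h₂, h, rfl⟩⟩
    obtain ⟨c, rfl, rfl⟩ | ⟨c, rfl, rfl⟩ := List.append_eq_append_iff.1 h
    · exact ⟨_, _, r₂, mem_comp.2 ⟨_, _, _, _, h₁, h₂, .inr ⟨c, rfl, rfl, rfl⟩⟩, by simp, rfl⟩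
    · exact ⟨_, _, r, mem_comp.2 ⟨_, _, _, _, h₁, h₂, .inl ⟨c, rfl, rfl, rfl⟩⟩, rfl, by simp⟩

theorem Bounded.comp {M : ℕ} (hA : A.Bounded K) (hB : B.Bounded M) :
    (A.comp B).Bounded (K + M) := by
  intro p v hpv
  obtain ⟨p₁, v₁, p₂, v₂, h₁, h₂, ⟨c, rfl, rfl, rfl⟩ | ⟨c, rfl, rfl, rfl⟩⟩ := mem_comp.1 hpv
  all_goals
    have := hA _ _ h₁
    have := hB _ _ h₂
    simp only [List.length_append] at *
    lia

end comp

end PrefixSystem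

/-! ### The action of terms on words -/

/-- The letter `L` or `R`, according to `b`. -/
def letter (b : Bool) : Term := bif b then L else R

/-- The product `w * X` of a word with a term. The head of a word is its rightmost factor, which is
the first to meet the next factor of a product. -/
def mulWord : List Bool → Term → Term
  | [], X => X
  | b :: w, X => mulWord w (comp (letter b) X)

/-- The shift spelled by a word, read as in `mulWord`. -/
def ofWord : List Bool → Term
  | [] => I
  | b :: w => mulWord w (letter b)

/-- The action of terms on words: if the normal form of `w * X` is a shift, then `act X w` spells
it, and otherwise `act X w` is undefined. -/
def act : Term → List Bool → Option (List Bool)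
  | I, w => some w
  | L, w => some (true :: w)
  | R, w => some (false :: w)
  | comp X Y, w => (act X w).bind (act Y)
  | pair _ _, [] => none
  | pair X Y, b :: w => bif b then act X w else act Y w

section Rewriting

variable {J : Set ℕ} {n : ℕ} {a b c X Y N : Term} {w v : List Bool}

theorem AssocEq.trans_red (h : AssocEq a b) (hbc : Red J b c) : Red J a c := by
  obtain ⟨d, hbd, hdc⟩ := hbc
  obtain rfl | ⟨e, ⟨b', e', hb, hs, he⟩, hed⟩ := hbd.cases_head
  · exact ⟨a, .refl, h.trans hdc⟩
  · exact ⟨d, .head ⟨b', e', h.trans hb, hs, he⟩ hed, hdc⟩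

theorem Red.of_assocEq (h : AssocEq a b) : Red J a b :=
  ⟨a, .refl, h⟩

theorem Red.of_rule (h : Rule n a b) (hn : n ∈ J) : Red J a b :=
  ⟨b, .single ⟨a, b, .refl a, .rule hn h, .refl b⟩, .refl b⟩

theorem Red.trans (hab : Red J a b) (hbc : Red J b c) : Red J a c := by
  obtain ⟨d, had, hdb⟩ := hab
  obtain ⟨e, hde, hec⟩ := hdb.trans_red hbc
  exact ⟨e, had.trans hde, hec⟩

theorem Red.comp_left (h : Red J a b) (c : Term) : Red J (comp a c) (comp b c) := by
  obtain ⟨d, had, hdb⟩ := h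
  refine ⟨comp d c, had.lift (comp · c) ?_, hdb.comp_congr (.refl c)⟩
  rintro x y ⟨x', y', hx, hs, hy⟩
  exact ⟨comp x' c, comp y' c, hx.comp_congr (.refl c), hs.comp_left, hy.comp_congr (.refl c)⟩

theorem Red.comp_right (a : Term) (h : Red J b c) : Red J (comp a b) (comp a c) := by
  obtain ⟨d, hbd, hdc⟩ := h
  refine ⟨comp a d, hbd.lift (comp a ·) ?_, .comp_congr (.refl a) hdc⟩
  rintro x y ⟨x', y', hx, hs, hy⟩
  exact ⟨comp a x', comp a y', .comp_congr (.refl a) hx, hs.comp_right, .comp_congr (.refl a) hy⟩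

theorem Red.mulWord (w : List Bool) (h : Red J a b) : Red J (mulWord w a) (mulWord w b) := by
  induction w generalizing a b with
  | nil => exact h
  | cons _ _ ih => exact ih (h.comp_right _)

theorem assocEq_mulWord (w : List Bool) (h : AssocEq a b) :
    AssocEq (mulWord w a) (mulWord w b) := by
  induction w generalizing a b with
  | nil => exact h
  | cons _ _ ih => exact ih (.comp_congr (.refl _) h)

theorem assocEq_comp_mulWord (w : List Bool) (X Y : Term) :
    AssocEq (comp (mulWord w X) Y) (mulWord w (comp X Y)) := by
  induction w generalizing X with
  | nil => exact .refl _
  | cons d w ih => exact (ih _).trans (assocEq_mulWord w (.assoc _ _ _))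

theorem red_comp_ofWord (w : List Bool) (X : Term) :
    Red rules15 (comp (ofWord w) X) (mulWord w X) := by
  cases w with
  | nil => exact .of_rule (.r4 X) (by simp [rules15])
  | cons d w => exact .of_assocEq (assocEq_comp_mulWord w (letter d) X)

theorem red_mulWord_I (w : List Bool) : Red rules15 (mulWord w I) (ofWord w) := by
  cases w with
  | nil => exact .of_assocEq (.refl I)
  | cons d w => exact .mulWord w (.of_rule (.r5 _) (by simp [rules15]))

theorem red_mulWord_cons_pair (d : Bool) (w : List Bool) (X Y : Term) :
    Red rules15 (mulWord (d :: w) (pair X Y)) (mulWord w (bif d then X else Y)) := by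
  refine .mulWord w ?_
  cases d
  · exact .of_rule (.r2 X Y) (by simp [rules15])
  · exact .of_rule (.r1 X Y) (by simp [rules15])

theorem red_mulWord_of_act_eq_some (h : act X w = some v) :
    Red rules15 (mulWord w X) (ofWord v) := by
  induction X generalizing w v with
  | I => exact Option.some.inj h ▸ red_mulWord_I w
  | L => exact Option.some.inj h ▸ .of_assocEq (.refl _)
  | R => exact Option.some.inj h ▸ .of_assocEq (.refl _)
  | comp X Y hX hY =>
    obtain ⟨u, hu, hv⟩ := Option.bind_eq_some_iff.1 h
    have hXY : Red rules15 (comp (mulWord w X) Y) (mulWord u Y) :=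
      ((hX hu).comp_left Y).trans (red_comp_ofWord u Y)
    exact (assocEq_comp_mulWord w X Y).symm.trans_red (hXY.trans (hY hv))
  | pair X Y hX hY =>
    cases w with
    | nil => exact absurd h (by simp [act])
    | cons d w =>
      refine (red_mulWord_cons_pair d w X Y).trans ?_
      cases d
      · exact hY h
      · exact hX h

theorem AssocEq.act_eq (h : AssocEq a b) (w : List Bool) : act a w = act b w := by
  induction h generalizing w with
  | assoc a b c => exact Option.bind_assoc ..
  | refl => rfl
  | symm _ ih => exact (ih w).symm
  | trans _ _ h₁ h₂ => exact (h₁ w).trans (h₂ w)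
  | comp_congr _ _ h₁ h₂ => rw [act, act, h₁, funext h₂]
  | pair_congr _ _ h₁ h₂ => cases w <;> simp only [act, h₁, h₂]

theorem Rule.act_eq (h : Rule n a b) (hn : n ∈ rules15) (w : List Bool) : act a w = act b w := by
  cases h with
  | r1 | r2 | r4 => rfl
  | r3 X Y Z => rcases w with _ | ⟨_ | _, w⟩ <;> rfl
  | r5 => exact Option.bind_fun_some _
  | r6 | r7 => simp [rules15] at hn

theorem Step.act_eq (h : Step rules15 a b) (w : List Bool) : act a w = act b w := by
  induction h generalizing w with
  | rule hn h => exact h.act_eq hn w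
  | comp_left _ ih => rw [act, act, ih]
  | comp_right _ ih => rw [act, act, funext ih]
  | pair_left _ ih | pair_right _ ih => cases w <;> simp only [act, ih]

theorem StepA.act_eq (h : StepA rules15 a b) (w : List Bool) : act a w = act b w := by
  obtain ⟨a', b', ha, hs, hb⟩ := h
  rw [ha.act_eq, hs.act_eq, hb.act_eq]

theorem Red.act_eq (h : Red rules15 a b) (w : List Bool) : act a w = act b w := by
  obtain ⟨c, hac, hcb⟩ := h
  refine Eq.trans ?_ (hcb.act_eq w)
  clear hcb
  induction hac with
  | refl => rfl
  | tail _ hs ih => exact ih.trans (hs.act_eq w)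

theorem IsShift.exists_act_eq_some (h : IsShift X) (w : List Bool) : ∃ v, act X w = some v := by
  induction h generalizing w with
  | unit | left | right => exact ⟨_, rfl⟩
  | comp _ _ hS hT =>
    obtain ⟨u, hu⟩ := hS w
    obtain ⟨v, hv⟩ := hT u
    exact ⟨v, by rw [act, hu, Option.bind_some, hv]⟩

/-- Nonempty products of the letters `L` and `R`. Unlike `IsShift` this excludes all occurrences
of `I`, so that no rule applies. -/
def IsLetterProduct : Term → Prop
  | I => False
  | L => True
  | R => True
  | comp a b => IsLetterProduct a ∧ IsLetterProduct b
  | pair _ _ => False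

theorem AssocEq.isLetterProduct_iff (h : AssocEq a b) : IsLetterProduct a ↔ IsLetterProduct b := by
  induction h with
  | assoc a b c => exact and_assoc
  | refl => rfl
  | symm _ ih => exact ih.symm
  | trans _ _ h₁ h₂ => exact h₁.trans h₂
  | comp_congr _ _ h₁ h₂ => exact and_congr h₁ h₂
  | pair_congr => rfl

theorem AssocEq.eq_I_iff (h : AssocEq a b) : a = I ↔ b = I := by
  induction h with
  | refl => rfl
  | symm _ ih => exact ih.symm
  | trans _ _ h₁ h₂ => exact h₁.trans h₂
  | assoc | comp_congr | pair_congr => simp only [reduceCtorEq]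

theorem IsLetterProduct.not_step (h : IsLetterProduct a) : ¬ Step rules15 a b := by
  intro hs
  induction hs with
  | rule hn hr => cases hr <;> simp [IsLetterProduct] at h
  | comp_left _ ih => exact ih h.1
  | comp_right _ ih => exact ih h.2
  | pair_left | pair_right => exact h

theorem isLetterProduct_letter (d : Bool) : IsLetterProduct (letter d) := by
  cases d <;> trivial

theorem IsLetterProduct.mulWord (h : IsLetterProduct a) (w : List Bool) :
    IsLetterProduct (mulWord w a) := by
  induction w generalizing a with
  | nil => exact h
  | cons d _ ih => exact ih ⟨isLetterProduct_letter d, h⟩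

theorem IsLetterProduct.isShift (h : IsLetterProduct a) : IsShift a := by
  induction a with
  | I | pair => exact h.elim
  | L => exact .left
  | R => exact .right
  | comp a b ha hb => exact .comp (ha h.1) (hb h.2)

theorem isShift_ofWord (w : List Bool) : IsShift (ofWord w) := by
  cases w with
  | nil => exact .unit
  | cons d w => exact ((isLetterProduct_letter d).mulWord w).isShift

theorem nf_ofWord (w : List Bool) : NF rules15 (ofWord w) := by
  rintro b ⟨a', b', ha, hs, -⟩
  cases w with
  | nil =>
    obtain rfl := ha.eq_I_iff.1 rfl
    cases hs with
    | rule _ hr => cases hr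
  | cons d w =>
    exact (ha.isLetterProduct_iff.1 ((isLetterProduct_letter d).mulWord w)).not_step hs

theorem AssocEq.lenLR_eq (h : AssocEq a b) : lenLR a = lenLR b := by
  induction h with
  | assoc a b c => exact add_assoc ..
  | refl => rfl
  | symm _ ih => exact ih.symm
  | trans _ _ h₁ h₂ => exact h₁.trans h₂
  | comp_congr _ _ h₁ h₂ | pair_congr _ _ h₁ h₂ => exact congrArg₂ (· + ·) h₁ h₂

theorem lenLR_mulWord (w : List Bool) (X : Term) : lenLR (mulWord w X) = w.length + lenLR X := by
  induction w generalizing X with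
  | nil => exact (Nat.zero_add _).symm
  | cons d w ih =>
    have hd : lenLR (letter d) = 1 := by cases d <;> rfl
    rw [mulWord, ih, lenLR, hd, List.length_cons]
    lia

theorem lenLR_ofWord (w : List Bool) : lenLR (ofWord w) = w.length := by
  cases w with
  | nil => rfl
  | cons d w => cases d <;> exact lenLR_mulWord w _

theorem nfIsShift_iff : nfIsShift X ↔ ∃ w, act X [] = some w := by
  constructor
  · rintro ⟨N, hXN, -, hN⟩
    exact hXN.act_eq [] ▸ hN.exists_act_eq_some []
  · rintro ⟨w, hw⟩
    exact ⟨ofWord w, red_mulWord_of_act_eq_some hw, nf_ofWord w, isShift_ofWord w⟩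

theorem lenLR_eq_length (hX : act X [] = some w) (hXN : Red rules15 X N) (hN : NF rules15 N) :
    lenLR N = w.length := by
  obtain ⟨c, hNc, hcw⟩ : Red rules15 N (ofWord w) :=
    red_mulWord_of_act_eq_some (w := []) (hXN.act_eq [] ▸ hX)
  obtain rfl | ⟨d, hd, -⟩ := hNc.cases_head
  · rw [hcw.lenLR_eq, lenLR_ofWord]
  · exact (hN d hd).elim

theorem exists_nf_le_lenLR_iff (hX : act X [] = some w) :
    (∃ N, Red rules15 X N ∧ NF rules15 N ∧ n ≤ lenLR N) ↔ n ≤ w.length := by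
  constructor
  · rintro ⟨N, hXN, hN, hn⟩
    exact lenLR_eq_length hX hXN hN ▸ hn
  · intro hn
    exact ⟨ofWord w, red_mulWord_of_act_eq_some hX, nf_ofWord w, (lenLR_ofWord w).symm ▸ hn⟩

end Rewriting

/-! ### Multiplication by terms as prefix rewriting -/

/-- The action of a term as a prefix rewriting system. -/
def rules : Term → PrefixSystem Bool
  | I => [([], [])]
  | L => [([], [true])]
  | R => [([], [false])]
  | comp X Y => (rules X).comp (rules Y)
  | pair X Y =>
    ((rules X).map fun e => (true :: e.1, e.2)) ++ (rules Y).map fun e => (false :: e.1, e.2)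

/-- The prefix rewriting system whose steps are the right multiplications by members of `B`. -/
def moves (B : List Term) : PrefixSystem Bool :=
  B.flatMap rules

section Moves

variable {t S : Term} {B : List Term} {w v : List Bool}

theorem rewrites_singleton_nil_iff {α : Type*} {x w y : List α} :
    PrefixSystem.Rewrites [([], x)] w y ↔ y = x ++ w := by
  simp [PrefixSystem.Rewrites]

theorem mem_rules_pair_iff {X Y : Term} {p v : List Bool} : (p, v) ∈ rules (pair X Y) ↔
    ∃ (d : Bool) (q : List Bool), p = d :: q ∧ (q, v) ∈ rules (bif d then X else Y) := by
  simp only [rules, List.mem_append, List.mem_map, Prod.exists, Prod.mk.injEq, Bool.exists_bool]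
  grind

theorem rewrites_rules_pair_cons_iff {X Y : Term} {d : Bool} :
    (rules (pair X Y)).Rewrites (d :: w) v ↔ (rules (bif d then X else Y)).Rewrites w v := by
  constructor
  · rintro ⟨p, u, r, hpu, hw, rfl⟩
    obtain ⟨d, q, rfl, hq⟩ := mem_rules_pair_iff.1 hpu
    obtain ⟨rfl, rfl⟩ := List.cons.inj hw
    exact ⟨q, u, r, hq, rfl, rfl⟩
  · rintro ⟨q, u, r, hqu, rfl, rfl⟩
    exact ⟨d :: q, u, r, mem_rules_pair_iff.2 ⟨d, q, rfl, hqu⟩, rfl, rfl⟩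

theorem not_rewrites_rules_pair_nil {X Y : Term} : ¬ (rules (pair X Y)).Rewrites [] v := by
  rintro ⟨p, u, r, hpu, hw, -⟩
  obtain ⟨d, q, rfl, -⟩ := mem_rules_pair_iff.1 hpu
  exact List.cons_ne_nil _ _ hw.symm

theorem rewrites_rules_iff : (rules t).Rewrites w v ↔ act t w = some v := by
  induction t generalizing w v with
  | I | L | R => exact rewrites_singleton_nil_iff.trans (by simp [act, eq_comm])
  | comp X Y hX hY =>
    simp only [rules, PrefixSystem.rewrites_comp_iff, hX, hY, act, Option.bind_eq_some_iff]
  | pair X Y hX hY =>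
    cases w with
    | nil => exact iff_of_false not_rewrites_rules_pair_nil (Option.some_ne_none v).symm
    | cons d w =>
      rw [rewrites_rules_pair_cons_iff]
      cases d
      exacts [hY, hX]

theorem encodeTerm_add_lt_encodeTerm_comp (X Y : Term) :
    encodeTerm X + encodeTerm Y < encodeTerm (comp X Y) := by
  have := Nat.add_le_pair (encodeTerm X) (encodeTerm Y)
  rw [encodeTerm]
  lia

theorem encodeTerm_add_lt_encodeTerm_pair (X Y : Term) :
    encodeTerm X + encodeTerm Y < encodeTerm (pair X Y) := by
  have := Nat.add_le_pair (encodeTerm X) (encodeTerm Y)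
  rw [encodeTerm]
  lia

theorem encodeTerm_le_encodeTermList (ht : t ∈ B) : encodeTerm t ≤ encodeTermList B := by
  induction B with
  | nil => exact absurd ht List.not_mem_nil
  | cons u B ih =>
    have := Nat.add_le_pair (encodeTerm u) (encodeTermList B)
    rw [encodeTermList]
    obtain rfl | ht := List.mem_cons.1 ht
    · lia
    · have := ih ht
      lia

theorem bounded_rules (t : Term) : (rules t).Bounded (encodeTerm t) := by
  induction t with
  | I | L | R => simp [rules, PrefixSystem.Bounded, encodeTerm]
  | comp X Y hX hY => exact (hX.comp hY).mono (encodeTerm_add_lt_encodeTerm_comp X Y).le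
  | pair X Y hX hY =>
    have hlt := encodeTerm_add_lt_encodeTerm_pair X Y
    intro p v hpv
    obtain ⟨d, q, rfl, hq⟩ := mem_rules_pair_iff.1 hpv
    have hqv : q.length ≤ encodeTerm X + encodeTerm Y ∧ v.length ≤ encodeTerm X + encodeTerm Y := by
      cases d
      · exact hY.mono (Nat.le_add_left ..) q v hq
      · exact hX.mono (Nat.le_add_right ..) q v hq
    rw [List.length_cons]
    lia

theorem exists_act_eq_some_of_encodeTerm_le (hw : encodeTerm t ≤ w.length) :
    ∃ v, act t w = some v ∧ w.length ≤ v.length + encodeTerm t := by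
  induction t generalizing w with
  | I | L | R => exact ⟨_, rfl, by grind⟩
  | comp X Y hX hY =>
    have hlt := encodeTerm_add_lt_encodeTerm_comp X Y
    obtain ⟨u, hu, hwu⟩ := hX (w := w) (by lia)
    obtain ⟨v, hv, huv⟩ := hY (w := u) (by lia)
    exact ⟨v, by rw [act, hu, Option.bind_some, hv], by lia⟩
  | pair X Y hX hY =>
    have hlt := encodeTerm_add_lt_encodeTerm_pair X Y
    obtain _ | ⟨d, w⟩ := w
    · simp only [List.length_nil] at hw
      lia
    rw [List.length_cons] at *
    cases d
    · obtain ⟨v, hv, hwv⟩ := hY (w := w) (by lia)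
      exact ⟨v, hv, by lia⟩
    · obtain ⟨v, hv, hwv⟩ := hX (w := w) (by lia)
      exact ⟨v, hv, by lia⟩

theorem bounded_moves (B : List Term) : (moves B).Bounded (encodeTermList B) := by
  intro p v hpv
  obtain ⟨t, ht, hpv⟩ := List.mem_flatMap.1 hpv
  exact (bounded_rules t).mono (encodeTerm_le_encodeTermList ht) p v hpv

theorem rewrites_moves_iff : (moves B).Rewrites w v ↔ ∃ t ∈ B, act t w = some v := by
  simp only [← rewrites_rules_iff, PrefixSystem.Rewrites, moves, List.mem_flatMap]
  grind

theorem reach_moves_iff : (moves B).Reach w v ↔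
    ∃ l : List Term, (∀ t ∈ l, t ∈ B) ∧ act (listProd l) w = some v := by
  constructor
  · intro h
    induction h using Relation.ReflTransGen.head_induction_on with
    | refl => exact ⟨[], by simp, rfl⟩
    | head hs _ ih =>
      obtain ⟨t, ht, hu⟩ := rewrites_moves_iff.1 hs
      obtain ⟨l, hl, hv⟩ := ih
      exact ⟨t :: l, List.forall_mem_cons.2 ⟨ht, hl⟩,
        by rw [listProd, act, hu, Option.bind_some, hv]⟩
  · rintro ⟨l, hl, hv⟩
    induction l generalizing w with
    | nil => exact Option.some.inj hv ▸ .refl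
    | cons t l ih =>
      obtain ⟨ht, hl⟩ := List.forall_mem_cons.1 hl
      obtain ⟨u, hu, huv⟩ := Option.bind_eq_some_iff.1 hv
      exact .head (rewrites_moves_iff.2 ⟨t, ht, hu⟩) (ih hl huv)

theorem act_listProd_append (l₁ l₂ : List Term) (w : List Bool) :
    act (listProd (l₁ ++ l₂)) w = (act (listProd l₁) w).bind (act (listProd l₂)) := by
  induction l₁ generalizing w with
  | nil => rfl
  | cons t l₁ ih => simp only [List.cons_append, listProd, act, ih, Option.bind_assoc]

theorem forall_exists_act_listProd_iff {s : List Bool} :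
    (∀ l : List Term, (∀ t ∈ l, t ∈ B) → ∃ v, act (listProd l) s = some v) ↔
      ∀ w, (moves B).Reach s w → ∀ t ∈ B, ∃ v, act t w = some v := by
  constructor
  · intro h w hw t ht
    obtain ⟨l, hl, hlw⟩ := reach_moves_iff.1 hw
    obtain ⟨v, hv⟩ := h (l ++ [t]) (by grind)
    rw [act_listProd_append, hlw, Option.bind_some, listProd, act] at hv
    obtain ⟨u, hu, -⟩ := Option.bind_eq_some_iff.1 hv
    exact ⟨u, hu⟩
  · intro h l hl
    induction l generalizing s with
    | nil => exact ⟨s, rfl⟩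
    | cons t l ih =>
      obtain ⟨ht, hl⟩ := List.forall_mem_cons.1 hl
      obtain ⟨u, hu⟩ := h s .refl t ht
      obtain ⟨v, hv⟩ := ih (fun w hw => h w (.head (rewrites_moves_iff.2 ⟨t, ht, hu⟩) hw)) hl
      exact ⟨v, by rw [listProd, act, hu, Option.bind_some, hv]⟩

theorem act_comp_of_act_eq_some {s : List Bool} (hS : act S w = some s) (X : Term) :
    act (comp S X) w = act X s := by
  rw [act, hS, Option.bind_some]

theorem badFor_iff : BadFor B S ↔ ∃ s, act S [] = some s ∧
    ∀ w, (moves B).Reach s w → ∀ t ∈ B, ∃ v, act t w = some v := by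
  simp only [BadFor, nfIsShift_iff, ← forall_exists_act_listProd_iff]
  constructor
  · intro h
    obtain ⟨_, h₀⟩ := h [] (List.forall_mem_nil _)
    obtain ⟨s, hs, -⟩ := Option.bind_eq_some_iff.1 h₀
    exact ⟨s, hs, fun l hl => act_comp_of_act_eq_some hs (listProd l) ▸ h l hl⟩
  · rintro ⟨s, hs, h⟩ l hl
    exact (act_comp_of_act_eq_some hs (listProd l)).symm ▸ h l hl

theorem extenuative_iff : Extenuative B S ↔ ∃ s, act S [] = some s ∧
    (∀ w, (moves B).Reach s w → ∀ t ∈ B, ∃ v, act t w = some v) ∧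
    ∀ n, ∃ w, (moves B).Reach s w ∧ n ≤ w.length := by
  rw [Extenuative, badFor_iff, ← exists_and_right]
  refine exists_congr fun s => ?_
  rw [and_assoc]
  refine and_congr_right fun hs => and_congr_right fun hdef => forall_congr' fun n => ?_
  have hact (l : List Term) : act (comp S (listProd l)) [] = act (listProd l) s :=
    act_comp_of_act_eq_some hs (listProd l)
  constructor
  · rintro ⟨l, hl, hN⟩
    obtain ⟨w, hw⟩ := forall_exists_act_listProd_iff.2 hdef l hl
    exact ⟨w, reach_moves_iff.2 ⟨l, hl, hw⟩, (exists_nf_le_lenLR_iff ((hact l).trans hw)).1 hN⟩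
  · rintro ⟨w, hw, hn⟩
    obtain ⟨l, hl, hlw⟩ := reach_moves_iff.1 hw
    exact ⟨l, hl, (exists_nf_le_lenLR_iff ((hact l).trans hlw)).2 hn⟩

end Moves

/-! ### Primitive recursive reachability -/

section PrimitiveRecursion

variable {α β : Type*} [Primcodable α] [Primcodable β] {p q : α → Prop}

theorem primrecPred_imp (hp : PrimrecPred p) (hq : PrimrecPred q) :
    PrimrecPred fun a => p a → q a :=
  (hp.not.or hq).of_eq fun _ => imp_iff_not_or.symm

theorem primrecPred_forall_mem {f : α → List β} {r : α × β → Prop} (hf : Primrec f)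
    (hr : PrimrecPred r) : PrimrecPred fun a => ∀ b ∈ f a, r (a, b) :=
  (PrimrecRel.forall_mem_list (R := fun b a => r (a, b))
    (hr.comp (Primrec.snd.pair Primrec.fst))).comp hf Primrec.id

theorem primrecPred_exists_mem {f : α → List β} {r : α × β → Prop} (hf : Primrec f)
    (hr : PrimrecPred r) : PrimrecPred fun a => ∃ b ∈ f a, r (a, b) :=
  (PrimrecRel.exists_mem_list (R := fun b a => r (a, b))
    (hr.comp (Primrec.snd.pair Primrec.fst))).comp hf Primrec.id

theorem primrecPred_mem {f : α → List β} {g : α → β} (hf : Primrec f) (hg : Primrec g) :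
    PrimrecPred fun a => g a ∈ f a := by
  classical
  exact (primrecPred_exists_mem hf (r := fun x => x.2 = g x.1)
    (Primrec.eq.comp Primrec.snd (hg.comp Primrec.fst))).of_eq fun a => by simp

theorem primrec_sublists' : Primrec (List.sublists' (α := α)) := by
  have hstep : Primrec₂ fun (a : α) (l : List (List α)) => l ++ l.map (List.cons a) :=
    Primrec.list_append.comp .snd
      (Primrec.list_map .snd (Primrec.list_cons.comp (.comp .fst .fst) .snd).to₂)
  have hfold : Primrec fun l : List α => l.foldr (fun a m => m ++ m.map (List.cons a)) [[]] :=
    Primrec.list_foldr .id (.const [[]]) (hstep.comp (.comp .fst .snd) (.comp .snd .snd)).to₂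
  refine hfold.of_eq fun l => ?_
  induction l with
  | nil => rfl
  | cons a l ih => rw [List.sublists'_cons, ← ih, List.foldr_cons]

theorem primrec_product : Primrec₂ fun (l₁ : List α) (l₂ : List β) => l₁ ×ˢ l₂ :=
  Primrec.list_flatMap Primrec.fst
    (Primrec.list_map (Primrec.snd.comp Primrec.fst)
      ((Primrec.snd.comp Primrec.fst).pair Primrec.snd).to₂).to₂

theorem exists_primrec_encode_iff (hp : PrimrecPred p) :
    ∃ f : ℕ → Bool, Primrec f ∧ ∀ a, f (Encodable.encode a) = true ↔ p a := by
  obtain ⟨_, hp⟩ := hp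
  refine ⟨fun n => ((Encodable.decode n).map fun a => decide (p a)).getD false,
    Primrec.option_getD.comp (Primrec.option_map .decode (hp.comp .snd).to₂) (.const false),
    fun a => ?_⟩
  simp only [Encodable.encodek, Option.map_some, Option.getD_some, decide_eq_true_iff]

end PrimitiveRecursion

section Words

variable (α : Type*) [Fintype α]

/-- The words of length at most `k`. -/
noncomputable def wordsLE : ℕ → List (List α)
  | 0 => [[]]
  | k + 1 => [] :: Finset.univ.toList.flatMap fun a => (wordsLE k).map (List.cons a)

variable {α}

theorem mem_wordsLE {k : ℕ} {w : List α} : w ∈ wordsLE α k ↔ w.length ≤ k := by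
  induction k generalizing w with
  | zero => simp [wordsLE]
  | succ k ih => cases w <;> simp [wordsLE, ih]

theorem ncard_length_le_le_length_wordsLE (k : ℕ) :
    {w : List α | w.length ≤ k}.ncard ≤ (wordsLE α k).length := by
  classical
  calc {w : List α | w.length ≤ k}.ncard = (wordsLE α k).toFinset.card := by
        rw [← Set.ncard_coe_finset]
        congr 1
        ext w
        simp [mem_wordsLE]
    _ ≤ _ := List.toFinset_card_le _

theorem primrec_wordsLE [Primcodable α] : Primrec (wordsLE α) := by
  have hstep : Primrec fun l : List (List α) =>
      [] :: Finset.univ.toList.flatMap fun a : α => l.map (List.cons a) :=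
    Primrec.list_cons.comp (.const []) (Primrec.list_flatMap (.const _)
      (Primrec.list_map .fst (Primrec.list_cons.comp (.comp .snd .fst) .snd).to₂).to₂)
  refine (Primrec.nat_rec₁ [[]] (hstep.comp .snd).to₂).of_eq fun k => ?_
  induction k with
  | zero => rfl
  | succ k ih => rw [wordsLE, ← ih]

end Words

namespace PrefixSystem

section Rules

variable {α β : Type*}

theorem rewrites_iff_exists_mem {R : PrefixSystem α} {x y : List α} :
    R.Rewrites x y ↔ ∃ e ∈ R, e.1 <+: x ∧ e.2 ++ x.drop e.1.length = y := by
  constructor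
  · rintro ⟨p, v, r, h, rfl, rfl⟩
    exact ⟨(p, v), h, List.prefix_append p r, by rw [List.drop_left]⟩
  · rintro ⟨⟨p, v⟩, h, ⟨r, rfl⟩, rfl⟩
    exact ⟨p, v, r, h, rfl, by rw [List.drop_left]⟩

/-- The total length of the sides of the rules, a computable bound on their lengths. -/
def size (R : PrefixSystem α) : ℕ :=
  (R.flatMap fun e => e.1 ++ e.2).length

theorem bounded_size (R : PrefixSystem α) : R.Bounded R.size := by
  intro p v hpv
  have hle : (p ++ v).length ≤ R.size :=
    (List.sublist_flatten_of_mem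
      (List.mem_map_of_mem (f := fun e : List α × List α => e.1 ++ e.2) hpv)).length_le
  rw [List.length_append] at hle
  lia

variable [Primcodable α] [Primcodable β]

theorem primrecPred_isPrefix {p w : β → List α} (hp : Primrec p) (hw : Primrec w) :
    PrimrecPred fun b => p b <+: w b := by
  classical
  have hdrop : Primrec fun b => p b ++ (w b).drop (p b).length :=
    Primrec.list_append.comp hp (Primrec.list_drop.comp (Primrec.list_length.comp hp) hw)
  exact (Primrec.eq.comp hdrop hw).of_eq fun b => List.prefix_iff_eq_append.symm

theorem primrecPred_rewrites {R : β → PrefixSystem α} {x y : β → List α} (hR : Primrec R)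
    (hx : Primrec x) (hy : Primrec y) : PrimrecPred fun b => (R b).Rewrites (x b) (y b) := by
  classical
  have hp : Primrec fun z : β × List α × List α => z.2.1 := .comp .fst .snd
  have hv : Primrec fun z : β × List α × List α => z.2.2 := .comp .snd .snd
  have hx' : Primrec fun z : β × List α × List α => x z.1 := hx.comp .fst
  have hxy : Primrec fun z : β × List α × List α => z.2.2 ++ (x z.1).drop z.2.1.length :=
    Primrec.list_append.comp hv (Primrec.list_drop.comp (Primrec.list_length.comp hp) hx')
  exact (primrecPred_exists_mem hR ((primrecPred_isPrefix hp hx').and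
    (Primrec.eq.comp hxy (hy.comp .fst)))).of_eq fun b =>
    (rewrites_iff_exists_mem (R := R b) (x := x b) (y := y b)).symm

theorem primrec_comp [DecidableEq α] : Primrec₂ (comp (α := α)) := by
  let γ := (PrefixSystem α × PrefixSystem α) × List α × List α
  have ha₁ : Primrec fun x : γ × List α × List α => x.1.2.1 := .comp .fst (.comp .snd .fst)
  have ha₂ : Primrec fun x : γ × List α × List α => x.1.2.2 := .comp .snd (.comp .snd .fst)
  have hb₁ : Primrec fun x : γ × List α × List α => x.2.1 := .comp .fst .snd
  have hb₂ : Primrec fun x : γ × List α × List α => x.2.2 := .comp .snd .snd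
  have hleft : Primrec fun x : γ × List α × List α =>
      if x.2.1 <+: x.1.2.2 then [(x.1.2.1, x.2.2 ++ x.1.2.2.drop x.2.1.length)] else [] :=
    .ite (primrecPred_isPrefix hb₁ ha₂)
      (Primrec.list_cons.comp (ha₁.pair (Primrec.list_append.comp hb₂
        (Primrec.list_drop.comp (Primrec.list_length.comp hb₁) ha₂))) (.const [])) (.const [])
  have hright : Primrec fun x : γ × List α × List α =>
      if x.1.2.2 <+: x.2.1 then [(x.1.2.1 ++ x.2.1.drop x.1.2.2.length, x.2.2)] else [] :=
    .ite (primrecPred_isPrefix ha₂ hb₁)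
      (Primrec.list_cons.comp (.pair (Primrec.list_append.comp ha₁
        (Primrec.list_drop.comp (Primrec.list_length.comp ha₂) hb₁)) hb₂) (.const [])) (.const [])
  exact Primrec.list_flatMap .fst
    (Primrec.list_flatMap (.comp .snd .fst) (Primrec.list_append.comp hleft hright).to₂).to₂

theorem primrec_size : Primrec (size (α := α)) :=
  Primrec.list_length.comp (Primrec.list_flatMap .id
    (Primrec.list_append.comp (.comp .fst .snd) (.comp .snd .snd)).to₂)

end Rules

section Decidability

variable {α : Type*} {R : PrefixSystem α} {K : ℕ} {x y : List α}

theorem isSaturated_mem_iff [Fintype α] {D : List (List α × List α)} :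
    R.IsSaturated K (fun x y => (x, y) ∈ D) ↔ (∀ e ∈ R, e ∈ D) ∧ (∀ x ∈ wordsLE α K, (x, x) ∈ D) ∧
      (∀ e ∈ D, ∀ f ∈ D, e.2 = f.1 → (e.1, f.2) ∈ D) ∧
      ∀ e ∈ D, ∀ z ∈ wordsLE α K, (e.1 ++ z).length ≤ K → (e.2 ++ z).length ≤ K →
        (e.1 ++ z, e.2 ++ z) ∈ D := by
  simp only [mem_wordsLE, Prod.forall]
  constructor
  · rintro ⟨hmem, hrefl, htrans, happend⟩
    refine ⟨hmem, hrefl, ?_, fun x y h z _ hx hy => happend x y z hx hy h⟩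
    rintro x y h y' z h' rfl
    exact htrans x y z h h'
  · rintro ⟨hmem, hrefl, htrans, happend⟩
    exact ⟨hmem, hrefl, fun x y z h h' => htrans x y h y z h' rfl,
      fun x y z hx hy h => happend x y h z (by grind) hx hy⟩

theorem reach_iff_forall_mem_sublists [Fintype α] (hR : R.Bounded K) (hx : x.length ≤ K)
    (hy : y.length ≤ K) :
    R.Reach x y ↔ ∀ D ∈ (wordsLE α K ×ˢ wordsLE α K).sublists',
      R.IsSaturated K (fun x y => (x, y) ∈ D) → (x, y) ∈ D := by
  classical
  refine ⟨fun h D _ hD => (reach_iff_forall_isSaturated hR hx hy).1 h _ hD, fun h => ?_⟩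
  have hmem (u v : List α) :
      (u, v) ∈ (wordsLE α K ×ˢ wordsLE α K).filter (fun e => R.Reach e.1 e.2) ↔
        (u.length ≤ K ∧ v.length ≤ K) ∧ R.Reach u v := by
    simp [mem_wordsLE]
  refine ((hmem x y).1 (h _ (List.mem_sublists'.2 List.filter_sublist) ?_)).2
  simp only [hmem]
  have hsat := isSaturated_reach R K
  exact ⟨fun p v h => ⟨hR p v h, hsat.of_mem p v h⟩, fun x hx => ⟨⟨hx, hx⟩, hsat.refl x hx⟩,
    fun x y z h h' => ⟨⟨h.1.1, h'.1.2⟩, h.2.trans h'.2⟩,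
    fun x y z hx hy h => ⟨⟨hx, hy⟩, h.2.append_right z⟩⟩

variable {β : Type*} [Primcodable β] [Primcodable α] [Finite α]

theorem primrecPred_isSaturated {R : β → PrefixSystem α} {K : β → ℕ}
    {D : β → List (List α × List α)} (hR : Primrec R) (hK : Primrec K) (hD : Primrec D) :
    PrimrecPred fun b => (R b).IsSaturated (K b) fun x y => (x, y) ∈ D b := by
  have := Fintype.ofFinite α
  have hW : Primrec fun b => wordsLE α (K b) := primrec_wordsLE.comp hK
  have hmem : PrimrecPred fun b => ∀ e ∈ R b, e ∈ D b :=
    primrecPred_forall_mem hR (primrecPred_mem (hD.comp .fst) .snd)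
  have hrefl : PrimrecPred fun b => ∀ x ∈ wordsLE α (K b), (x, x) ∈ D b :=
    primrecPred_forall_mem hW (primrecPred_mem (hD.comp .fst) (.pair .snd .snd))
  have htrans : PrimrecPred fun b => ∀ e ∈ D b, ∀ f ∈ D b, e.2 = f.1 → (e.1, f.2) ∈ D b := by
    classical
    have he : Primrec fun x : (β × List α × List α) × List α × List α => x.1.2 :=
      .comp .snd .fst
    exact primrecPred_forall_mem hD (primrecPred_forall_mem (hD.comp .fst)
      (primrecPred_imp (Primrec.eq.comp (.comp .snd he) (.comp .fst .snd))
        (primrecPred_mem (hD.comp (.comp .fst .fst)) (.pair (.comp .fst he) (.comp .snd .snd)))))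
  have happend : PrimrecPred fun b => ∀ e ∈ D b, ∀ z ∈ wordsLE α (K b),
      (e.1 ++ z).length ≤ K b → (e.2 ++ z).length ≤ K b → (e.1 ++ z, e.2 ++ z) ∈ D b := by
    have hK' : Primrec fun x : (β × List α × List α) × List α => K x.1.1 :=
      hK.comp (.comp .fst .fst)
    have h₁ : Primrec fun x : (β × List α × List α) × List α => x.1.2.1 ++ x.2 :=
      Primrec.list_append.comp (.comp .fst (.comp .snd .fst)) .snd
    have h₂ : Primrec fun x : (β × List α × List α) × List α => x.1.2.2 ++ x.2 :=
      Primrec.list_append.comp (.comp .snd (.comp .snd .fst)) .snd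
    exact primrecPred_forall_mem hD (primrecPred_forall_mem (hW.comp .fst)
      (primrecPred_imp (Primrec.nat_le.comp (Primrec.list_length.comp h₁) hK')
        (primrecPred_imp (Primrec.nat_le.comp (Primrec.list_length.comp h₂) hK')
          (primrecPred_mem (hD.comp (.comp .fst .fst)) (.pair h₁ h₂)))))
  exact (hmem.and (hrefl.and (htrans.and happend))).of_eq fun _ => isSaturated_mem_iff.symm

theorem primrecPred_reach {R : β → PrefixSystem α} {x y : β → List α} (hR : Primrec R)
    (hx : Primrec x) (hy : Primrec y) : PrimrecPred fun b => (R b).Reach (x b) (y b) := by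
  have := Fintype.ofFinite α
  let K (b : β) : ℕ := (R b).size + ((x b).length + (y b).length)
  have hK : Primrec K := Primrec.nat_add.comp (primrec_size.comp hR)
    (Primrec.nat_add.comp (Primrec.list_length.comp hx) (Primrec.list_length.comp hy))
  have hW : Primrec fun b => wordsLE α (K b) := primrec_wordsLE.comp hK
  have hsat : PrimrecPred fun b => ∀ D ∈ (wordsLE α (K b) ×ˢ wordsLE α (K b)).sublists',
      (R b).IsSaturated (K b) (fun x y => (x, y) ∈ D) → (x b, y b) ∈ D :=
    primrecPred_forall_mem (primrec_sublists'.comp (primrec_product.comp hW hW))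
      (primrecPred_imp (primrecPred_isSaturated (hR.comp .fst) (hK.comp .fst) .snd)
        (primrecPred_mem .snd (.pair (hx.comp .fst) (hy.comp .fst))))
  refine hsat.of_eq fun b => (reach_iff_forall_mem_sublists ?_ ?_ ?_).symm
  · exact (bounded_size (R b)).mono (Nat.le_add_right ..)
  · exact (Nat.le_add_right ..).trans (Nat.le_add_left ..)
  · exact (Nat.le_add_left ..).trans (Nat.le_add_left ..)

end Decidability

end PrefixSystem

/-! ### Decision procedure -/

section Coding

theorem encodeTerm_injective : Function.Injective encodeTerm := by
  intro a b h
  induction a generalizing b with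
  | I | L | R => cases b <;> simp only [encodeTerm] at h <;> first | rfl | lia
  | comp a₁ a₂ h₁ h₂ =>
    cases b with
    | comp b₁ b₂ =>
      obtain ⟨e₁, e₂⟩ : encodeTerm a₁ = encodeTerm b₁ ∧ encodeTerm a₂ = encodeTerm b₂ := by
        simpa [encodeTerm, Nat.pair_eq_pair] using h
      rw [h₁ e₁, h₂ e₂]
    | _ => simp only [encodeTerm] at h; lia
  | pair a₁ a₂ h₁ h₂ =>
    cases b with
    | pair b₁ b₂ =>
      obtain ⟨e₁, e₂⟩ : encodeTerm a₁ = encodeTerm b₁ ∧ encodeTerm a₂ = encodeTerm b₂ := by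
        simpa [encodeTerm, Nat.pair_eq_pair] using h
      rw [h₁ e₁, h₂ e₂]
    | _ => simp only [encodeTerm] at h; lia

theorem encodeTerm_surjective : Function.Surjective encodeTerm := by
  intro n
  induction n using Nat.strong_induction_on with
  | _ n ih =>
    match n, ih with
    | 0, _ => exact ⟨I, rfl⟩
    | 1, _ => exact ⟨L, rfl⟩
    | 2, _ => exact ⟨R, rfl⟩
    | n + 3, ih =>
      obtain ⟨a, ha⟩ := ih (n / 2).unpair.1 (by have := Nat.unpair_left_le (n / 2); lia)
      obtain ⟨b, hb⟩ := ih (n / 2).unpair.2 (by have := Nat.unpair_right_le (n / 2); lia)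
      obtain hn | hn := Nat.mod_two_eq_zero_or_one n
      · exact ⟨comp a b, by rw [encodeTerm, ha, hb, Nat.pair_unpair]; lia⟩
      · exact ⟨pair a b, by rw [encodeTerm, ha, hb, Nat.pair_unpair]; lia⟩

/-- Terms as natural numbers, by `encodeTerm`. -/
noncomputable def termEquivNat : Term ≃ ℕ :=
  Equiv.ofBijective encodeTerm ⟨encodeTerm_injective, encodeTerm_surjective⟩

/-- The primitive recursive functions on terms are those that are primitive recursive in the code
`encodeTerm`. -/
noncomputable instance : Primcodable Term :=
  Primcodable.ofEquiv ℕ termEquivNat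

theorem encode_term (t : Term) : Encodable.encode t = encodeTerm t := rfl

theorem encode_termList (B : List Term) : Encodable.encode B = encodeTermList B := by
  induction B with
  | nil => rfl
  | cons t B ih => rw [Encodable.encode_list_cons, ih]; rfl

theorem primrec_encodeTerm : Primrec encodeTerm :=
  Primrec.encode

theorem primrec_encodeTermList : Primrec encodeTermList :=
  Primrec.encode.of_eq encode_termList

section StructuralRecursion

variable {σ : Type*} {f : Term → σ} {g h : σ → σ → σ}

/-- One step of a structural recursion on terms, transported to their codes: the value at the term
of code `l.length`, given the list `l` of the values at all smaller codes. The entries of `leaves`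
are the values at `I`, `L` and `R`, of codes `0`, `1` and `2`; `g` treats compositions, of odd code,
and `h` treats pairs, of even code. -/
def codeRecStep (leaves : List σ) (g h : σ → σ → σ) (l : List σ) : Option σ :=
  if l.length < 3 then leaves[l.length]? else
    l[((l.length - 3) / 2).unpair.1]?.bind fun x => l[((l.length - 3) / 2).unpair.2]?.map fun y =>
      if l.length % 2 = 1 then g x y else h x y

theorem codeRecStep_map_range (hcomp : ∀ a b, f (comp a b) = g (f a) (f b))
    (hpair : ∀ a b, f (pair a b) = h (f a) (f b)) (t : Term) :
    codeRecStep [f I, f L, f R] g h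
      ((List.range (encodeTerm t)).map fun n => f (termEquivNat.symm n)) = some (f t) := by
  have hget {a : Term} {n : ℕ} (ha : encodeTerm a < n) :
      ((List.range n).map fun n => f (termEquivNat.symm n))[encodeTerm a]? = some (f a) := by
    rw [List.getElem?_map, List.getElem?_range ha]
    exact congrArg (some ∘ f) (termEquivNat.symm_apply_apply a)
  cases t with
  | I | L | R => simp [codeRecStep, encodeTerm]
  | comp a b =>
    have hlt := encodeTerm_add_lt_encodeTerm_comp a b
    have hcode : encodeTerm (comp a b) = 2 * Nat.pair (encodeTerm a) (encodeTerm b) + 3 := rfl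
    have hargs : ((encodeTerm (comp a b) - 3) / 2).unpair = (encodeTerm a, encodeTerm b) := by
      rw [show (encodeTerm (comp a b) - 3) / 2 = Nat.pair (encodeTerm a) (encodeTerm b) by lia,
        Nat.unpair_pair]
    simp only [codeRecStep, List.length_map, List.length_range, hargs]
    rw [if_neg (by lia), hget (by lia), hget (by lia), Option.bind_some, Option.map_some,
      if_pos (by lia), hcomp]
  | pair a b =>
    have hlt := encodeTerm_add_lt_encodeTerm_pair a b
    have hcode : encodeTerm (pair a b) = 2 * Nat.pair (encodeTerm a) (encodeTerm b) + 4 := rfl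
    have hargs : ((encodeTerm (pair a b) - 3) / 2).unpair = (encodeTerm a, encodeTerm b) := by
      rw [show (encodeTerm (pair a b) - 3) / 2 = Nat.pair (encodeTerm a) (encodeTerm b) by lia,
        Nat.unpair_pair]
    simp only [codeRecStep, List.length_map, List.length_range, hargs]
    rw [if_neg (by lia), hget (by lia), hget (by lia), Option.bind_some, Option.map_some,
      if_neg (by lia), hpair]

variable [Primcodable σ]

theorem primrec_codeRecStep (leaves : List σ) (hg : Primrec₂ g) (hh : Primrec₂ h) :
    Primrec (codeRecStep leaves g h) := by
  have hlen : Primrec fun l : List σ => l.length := Primrec.list_length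
  have hargs : Primrec fun l : List σ => ((l.length - 3) / 2).unpair :=
    Primrec.unpair.comp (Primrec.nat_div.comp (Primrec.nat_sub.comp hlen (.const 3)) (.const 2))
  have hnode : Primrec₂ fun (lx : List σ × σ) (y : σ) =>
      if lx.1.length % 2 = 1 then g lx.2 y else h lx.2 y :=
    Primrec.ite (Primrec.eq.comp (Primrec.nat_mod.comp (hlen.comp (.comp .fst .fst)) (.const 2))
      (.const 1)) (hg.comp (.comp .snd .fst) .snd) (hh.comp (.comp .snd .fst) .snd)
  exact .ite (Primrec.nat_lt.comp hlen (.const 3)) (Primrec.list_getElem?.comp (.const leaves) hlen)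
    (Primrec.option_bind (Primrec.list_getElem?.comp .id (.comp .fst hargs))
      (Primrec.option_map (Primrec.list_getElem?.comp .fst (.comp .snd (hargs.comp .fst)))
        hnode).to₂)

theorem primrec_of_structural_recursion (hg : Primrec₂ g) (hh : Primrec₂ h)
    (hcomp : ∀ a b, f (comp a b) = g (f a) (f b)) (hpair : ∀ a b, f (pair a b) = h (f a) (f b)) :
    Primrec f := by
  let F (n : ℕ) : σ := f (termEquivNat.symm n)
  have hF (t : Term) : F (encodeTerm t) = f t := congrArg f (termEquivNat.symm_apply_apply t)
  have hstrong : Primrec₂ fun (_ : Unit) n => F n :=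
    Primrec.nat_strong_rec _ ((primrec_codeRecStep [f I, f L, f R] hg hh).comp .snd).to₂
      fun _ n => by
        obtain ⟨t, rfl⟩ := encodeTerm_surjective n
        exact (codeRecStep_map_range hcomp hpair t).trans (congrArg some (hF t).symm)
  exact (hstrong.comp (.const ()) primrec_encodeTerm).of_eq hF

end StructuralRecursion

theorem primrec_rules : Primrec rules := by
  have hcons (d : Bool) : Primrec fun R : PrefixSystem Bool => R.map fun e => (d :: e.1, e.2) :=
    Primrec.list_map .id (Primrec.pair (Primrec.list_cons.comp (.const d) (.comp .fst .snd))
      (.comp .snd .snd)).to₂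
  exact primrec_of_structural_recursion PrefixSystem.primrec_comp
    (Primrec.list_append.comp ((hcons true).comp .fst) ((hcons false).comp .snd)).to₂
    (fun _ _ => rfl) (fun _ _ => rfl)

theorem primrec_moves : Primrec moves :=
  Primrec.list_flatMap .id (primrec_rules.comp .snd).to₂

end Coding

section Decision

variable {t S : Term} {B : List Term} {K M : ℕ} {w v : List Bool}

theorem length_le_of_act_eq_some (hv : act t w = some v) :
    v.length ≤ w.length + encodeTerm t :=
  (rewrites_rules_iff.2 hv).length_le (bounded_rules t)

theorem exists_act_eq_some_iff_exists_mem_wordsLE (hK : w.length + encodeTerm t ≤ K) :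
    (∃ v, act t w = some v) ↔ ∃ v ∈ wordsLE Bool K, (rules t).Rewrites w v := by
  simp only [rewrites_rules_iff, mem_wordsLE]
  exact ⟨fun ⟨v, hv⟩ => ⟨v, (length_le_of_act_eq_some hv).trans hK, hv⟩, fun ⟨v, _, hv⟩ => ⟨v, hv⟩⟩

theorem forall_reach_exists_act_iff {s : List Bool} (hB : encodeTermList B ≤ K) :
    (∀ w, (moves B).Reach s w → ∀ t ∈ B, ∃ v, act t w = some v) ↔
      ∀ w ∈ wordsLE Bool K, (moves B).Reach s w → ∀ t ∈ B,
        ∃ v ∈ wordsLE Bool (K + K), (rules t).Rewrites w v := by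
  have hK (t : Term) (ht : t ∈ B) : encodeTerm t ≤ K := (encodeTerm_le_encodeTermList ht).trans hB
  constructor
  · intro h w hw hsw t ht
    exact (exists_act_eq_some_iff_exists_mem_wordsLE
      (Nat.add_le_add (mem_wordsLE.1 hw) (hK t ht))).1 (h w hsw t ht)
  · intro h w hsw t ht
    obtain hw | hw := le_total w.length K
    · obtain ⟨v, -, hv⟩ := h w (mem_wordsLE.2 hw) hsw t ht
      exact ⟨v, rewrites_rules_iff.1 hv⟩
    · obtain ⟨v, hv, -⟩ := exists_act_eq_some_of_encodeTerm_le ((hK t ht).trans hw)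
      exact ⟨v, hv⟩

theorem extenuative_iff_exists_mem_wordsLE (hK : encodeTermList B + encodeTerm S ≤ K)
    (hM : K * ((wordsLE Bool K).length + 1) ≤ M) : Extenuative B S ↔
      ∃ s ∈ wordsLE Bool K, (rules S).Rewrites [] s ∧
        (∀ w ∈ wordsLE Bool K, (moves B).Reach s w → ∀ t ∈ B,
          ∃ v ∈ wordsLE Bool (K + K), (rules t).Rewrites w v) ∧
        ∃ w ∈ wordsLE Bool (M + K), (moves B).Reach s w ∧ M < w.length := by
  have hB : encodeTermList B ≤ K := (Nat.le_add_right ..).trans hK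
  have hS {s : List Bool} (hs : act S [] = some s) : s.length ≤ K :=
    (length_le_of_act_eq_some hs).trans ((Nat.add_le_add_right (Nat.zero_le _) _).trans hK)
  have hpump : K * ({y : List Bool | y.length ≤ K}.ncard + 1) ≤ M :=
    (Nat.mul_le_mul_left _ (Nat.succ_le_succ (ncard_length_le_le_length_wordsLE _))).trans hM
  have hext {s : List Bool} (hs : act S [] = some s) :
      (∀ n, ∃ w, (moves B).Reach s w ∧ n ≤ w.length) ↔
        ∃ w ∈ wordsLE Bool (M + K), (moves B).Reach s w ∧ M < w.length := by
    rw [PrefixSystem.forall_exists_reach_le_length_iff ((bounded_moves B).mono hB) (hS hs) hpump]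
    exact exists_congr fun w => by rw [mem_wordsLE]; tauto
  rw [extenuative_iff]
  constructor
  · rintro ⟨s, hs, hdef, hunb⟩
    exact ⟨s, mem_wordsLE.2 (hS hs), rewrites_rules_iff.2 hs,
      (forall_reach_exists_act_iff hB).1 hdef, (hext hs).1 hunb⟩
  · rintro ⟨s, -, hs, hdef, hunb⟩
    have hs := rewrites_rules_iff.1 hs
    exact ⟨s, hs, (forall_reach_exists_act_iff hB).2 hdef, (hext hs).2 hunb⟩

theorem primrecPred_forall_reach_exists_rewrites {β : Type*} [Primcodable β] {B : β → List Term}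
    {s : β → List Bool} {K : β → ℕ} (hB : Primrec B) (hs : Primrec s) (hK : Primrec K) :
    PrimrecPred fun b => ∀ w ∈ wordsLE Bool (K b), (moves (B b)).Reach (s b) w → ∀ t ∈ B b,
      ∃ v ∈ wordsLE Bool (K b + K b), (rules t).Rewrites w v := by
  have hreach : PrimrecPred fun x : β × List Bool => (moves (B x.1)).Reach (s x.1) x.2 :=
    PrefixSystem.primrecPred_reach (primrec_moves.comp (hB.comp .fst)) (hs.comp .fst) .snd
  have hwords : Primrec fun x : (β × List Bool) × Term => wordsLE Bool (K x.1.1 + K x.1.1) :=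
    primrec_wordsLE.comp ((Primrec.nat_add.comp hK hK).comp (.comp .fst .fst))
  have hrewrites : PrimrecPred fun x : ((β × List Bool) × Term) × List Bool =>
      (rules x.1.2).Rewrites x.1.1.2 x.2 :=
    PrefixSystem.primrecPred_rewrites (primrec_rules.comp (.comp .snd .fst))
      (.comp .snd (.comp .fst .fst)) .snd
  exact primrecPred_forall_mem (primrec_wordsLE.comp hK) (primrecPred_imp hreach
    (primrecPred_forall_mem (hB.comp .fst) (primrecPred_exists_mem hwords hrewrites)))

theorem primrecPred_extenuative :
    PrimrecPred fun x : List Term × Term => Extenuative x.1 x.2 := by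
  let K (x : List Term × Term) : ℕ := encodeTermList x.1 + encodeTerm x.2
  let M (x : List Term × Term) : ℕ := K x * ((wordsLE Bool (K x)).length + 1)
  have hK : Primrec K := Primrec.nat_add.comp (primrec_encodeTermList.comp .fst)
    (primrec_encodeTerm.comp .snd)
  have hW : Primrec fun x => wordsLE Bool (K x) := primrec_wordsLE.comp hK
  have hM : Primrec M := Primrec.nat_mul.comp hK (Primrec.succ.comp (Primrec.list_length.comp hW))
  have hB : Primrec fun x : (List Term × Term) × List Bool => x.1.1 := .comp .fst .fst
  have hstart : PrimrecPred fun x : (List Term × Term) × List Bool =>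
      (rules x.1.2).Rewrites [] x.2 :=
    PrefixSystem.primrecPred_rewrites (primrec_rules.comp (.comp .snd .fst)) (.const []) .snd
  have hdefined : PrimrecPred fun x : (List Term × Term) × List Bool =>
      ∀ w ∈ wordsLE Bool (K x.1), (moves x.1.1).Reach x.2 w → ∀ t ∈ x.1.1,
        ∃ v ∈ wordsLE Bool (K x.1 + K x.1), (rules t).Rewrites w v :=
    primrecPred_forall_reach_exists_rewrites hB .snd (hK.comp .fst)
  have hlong : PrimrecPred fun x : (List Term × Term) × List Bool =>
      ∃ w ∈ wordsLE Bool (M x.1 + K x.1), (moves x.1.1).Reach x.2 w ∧ M x.1 < w.length :=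
    primrecPred_exists_mem (primrec_wordsLE.comp ((Primrec.nat_add.comp hM hK).comp .fst))
      ((PrefixSystem.primrecPred_reach (primrec_moves.comp (hB.comp .fst)) (.comp .snd .fst)
        .snd).and
        (Primrec.nat_lt.comp (hM.comp (.comp .fst .fst)) (Primrec.list_length.comp .snd)))
  exact (primrecPred_exists_mem hW (hstart.and (hdefined.and hlong))).of_eq fun x =>
    (extenuative_iff_exists_mem_wordsLE (le_refl (K x)) (le_refl (M x))).symm

end Decision

theorem extenuative_decidable_general : ∃ f : ℕ → Bool, Primrec f ∧ ∀ (B : List Term) (S : Term),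
    f (Nat.pair (encodeTermList B) (encodeTerm S)) = true ↔ Extenuative B S := by
  obtain ⟨f, hf, hfx⟩ := exists_primrec_encode_iff primrecPred_extenuative
  refine ⟨f, hf, fun B S => ?_⟩
  rw [← hfx (B, S), Encodable.encode_prod_val, encode_termList, encode_term]

/-- It is decidable, given a finite set `B` of terms in CQ normal form and a
shift `S`, whether `S` is extenuative for `B`. -/
theorem extenuative_decidable :
    ∃ f : ℕ → Bool, Computable f ∧
      ∀ (B : List Term) (S : Term), (∀ t ∈ B, NF rules15 t) → IsShift S →
        (f (Nat.pair (encodeTermList B) (encodeTerm S)) = true ↔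
          Extenuative B S) := by
  obtain ⟨f, hf, h⟩ := extenuative_decidable_general
  exact ⟨f, hf.to_comp, fun B S _ _ => h B S⟩
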